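/- For each integer d ≥ 2, the critical point p_h(S^d) of the d-ray star graph S^d equals the unique solution p ∈ (0, 1/4] of the equation ((1 + √(1 − 4p))/2)^d = p. -/

import Mathlib

open MeasureTheory ProbabilityTheory

/-- A process `X` indexed by the vertices of a graph `G` is *1-dependent* if its
restrictions to any two vertex sets at graph distance greater than 1 (i.e. containing
no common and no adjacent vertices) are independent. -/
def OneDependent {V E Ω : Type*} [MeasurableSpace E] (G : SimpleGraph V)
    [MeasurableSpace Ω] (μ : Measure Ω) (X : V → Ω → E) : Prop :=
  ∀ A B : Set V, (∀ a ∈ A, ∀ b ∈ B, a ≠ b ∧ ¬G.Adj a b) →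
    IndepFun (fun ω (a : A) => X a.1 ω) (fun ω (b : B) => X b.1 ω) μ

/-- A `{0,1}`-valued process is a *hard-core process* on `G` if almost surely no two
adjacent vertices both take the value `1` (`true`). -/
def HardCore {V Ω : Type*} (G : SimpleGraph V) [MeasurableSpace Ω]
    (μ : Measure Ω) (J : V → Ω → Bool) : Prop :=
  ∀ u v, G.Adj u v → μ {ω | J u ω = true ∧ J v ω = true} = 0

/-- The critical point `p_h(G)`: the supremum of all `p` for which a 1-dependent
hard-core process on `G` with marginals `P(J_v = 1) = p` exists. -/
noncomputable def pCrit {V : Type*} (G : SimpleGraph V) : ℝ :=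
  sSup {p : ℝ | ∃ (Ω : Type) (_ : MeasurableSpace Ω) (μ : Measure Ω),
    IsProbabilityMeasure μ ∧ ∃ J : V → Ω → Bool,
      (∀ v, Measurable (J v)) ∧ HardCore G μ J ∧ OneDependent G μ J ∧
      ∀ v, (μ {ω | J v ω = true}).toReal = p}

/-- The `d`-ray star graph: a distinguished vertex `none`, and `d` infinite rays;
`some (i, k)` is the `(k+1)`-st vertex of ray `i`. -/
def starGraph (d : ℕ) : SimpleGraph (Option (Fin d × ℕ)) :=
  SimpleGraph.fromRel (fun u v =>
    (∃ i, u = none ∧ v = some (i, 0)) ∨ (∃ i k, u = some (i, k) ∧ v = some (i, k + 1)))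

/-!
Lower bound: orient every edge independently, towards the centre with probability `x`. The sinks
of this orientation form a 1-dependent hard-core process; the centre is a sink with probability
`x ^ d`, and every other vertex with probability `x * (1 - x)`. Both equal `p` when `x` is the
larger root of `x * (1 - x) = p` and `p` solves the critical equation.

Upper bound: in a 1-dependent hard-core process the probability that a finite set is vacant is
determined by the marginals through the recursion `P(S ∪ {v}) = P(S) - p * P(S \ N(v))`. On a ray
it gives a sequence `a n` for the segments with `n` vertices, whose ratios `a (n + 1) / a n`
decrease to the larger root `x` of `x * (1 - x) = p`. Applied to the centre together with the
first `n + 1` vertices of every ray, it gives `p * a n ^ d ≤ a (n + 1) ^ d`, hence `p ≤ x ^ d` in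
the limit. As `x` decreases when `p` grows, no `p` beyond the solution of `x ^ d = p` is possible.
-/

open Filter Topology

/-- A measurable 1-dependent hard-core process on `G`, with no condition on the marginals. -/
structure IsOneDependentHardCore {V Ω : Type*} (G : SimpleGraph V) [MeasurableSpace Ω]
    (μ : Measure Ω) (J : V → Ω → Bool) : Prop where
  measurable : ∀ v, Measurable (J v)
  hardCore : HardCore G μ J
  oneDependent : OneDependent G μ J

/-- The values of `p` for which there is a 1-dependent hard-core process on `G` with
marginals `p`; the critical point `pCrit G` is their supremum. -/
def hardCoreMarginals {V : Type*} (G : SimpleGraph V) : Set ℝ :=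
  {p | ∃ (Ω : Type) (_ : MeasurableSpace Ω) (μ : Measure Ω), IsProbabilityMeasure μ ∧
    ∃ J : V → Ω → Bool, IsOneDependentHardCore G μ J ∧ ∀ v, μ.real {ω | J v ω = true} = p}

theorem pCrit_eq_sSup_hardCoreMarginals {V : Type*} (G : SimpleGraph V) :
    pCrit G = sSup (hardCoreMarginals G) := by
  refine congrArg sSup (Set.ext fun p => ⟨?_, ?_⟩)
  · rintro ⟨Ω, _, μ, hμ, J, hm, hH, hD, hp⟩
    exact ⟨Ω, _, μ, hμ, J, ⟨hm, hH, hD⟩, hp⟩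
  · rintro ⟨Ω, _, μ, hμ, J, ⟨hm, hH, hD⟩, hp⟩
    exact ⟨Ω, _, μ, hμ, J, hm, hH, hD, hp⟩

/-! ### Sinks of a random orientation -/

section BlockFactor

variable {V ι E F Ω : Type*} [MeasurableSpace E] [mF : MeasurableSpace F] [MeasurableSpace Ω]
  {G : SimpleGraph V} {μ : Measure Ω} {ξ : ι → Ω → F} {X : V → Ω → E}

theorem OneDependent.of_iIndepFun (hξ : iIndepFun ξ μ) (hξm : ∀ i, Measurable (ξ i))
    (s : V → Set ι) (hs : ∀ u v, u ≠ v → ¬G.Adj u v → Disjoint (s u) (s v))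
    (hX : ∀ v, Measurable[⨆ i ∈ s v, mF.comap (ξ i)] (X v)) : OneDependent G μ X := by
  intro A B hAB
  have hdisj : Disjoint (⋃ a ∈ A, s a) (⋃ b ∈ B, s b) := by
    simp only [Set.disjoint_iUnion_left, Set.disjoint_iUnion_right]
    exact fun b hb a ha => hs a b (hAB a ha b hb).1 (hAB a ha b hb).2
  have hle (C : Set V) : MeasurableSpace.comap (fun ω (c : C) => X c.1 ω) inferInstance ≤
      ⨆ i ∈ ⋃ c ∈ C, s c, mF.comap (ξ i) := by
    refine measurable_iff_comap_le.1 (@measurable_pi_lambda _ _ _ (_) _ _ fun c => ?_)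
    exact (hX c).mono (biSup_mono fun i hi => Set.mem_biUnion c.2 hi) le_rfl
  rw [IndepFun_iff_Indep]
  exact indep_of_indep_of_le_left (indep_of_indep_of_le_right
    (indep_iSup_of_disjoint (fun i => (hξm i).comap_le) hξ hdisj) (hle B)) (hle A)

end BlockFactor

section SinkIndicator

variable {V α Ω : Type*} {G : SimpleGraph V} [LinearOrder α] (h : G.Coloring α)
  {ξ : Sym2 V → Ω → Bool}

open Classical in
/-- The indicators of the sinks of the orientation of `G` in which an edge `e` points to its
endpoint of smaller colour if `ξ e` is true, and to its endpoint of larger colour otherwise. -/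
noncomputable def sinkIndicator (ξ : Sym2 V → Ω → Bool) (v : V) (ω : Ω) : Bool :=
  decide (∀ w, G.Adj v w → ξ s(v, w) ω = decide (h v < h w))

theorem setOf_sinkIndicator_eq_true (v : V) :
    {ω | sinkIndicator h ξ v ω = true} =
      ⋂ w ∈ G.neighborSet v, ξ s(v, w) ⁻¹' {decide (h v < h w)} := by
  ext ω
  simp [sinkIndicator]

theorem not_sinkIndicator_of_adj {u v : V} (huv : G.Adj u v) (ω : Ω) :
    ¬(sinkIndicator h ξ u ω = true ∧ sinkIndicator h ξ v ω = true) := by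
  simp only [sinkIndicator, decide_eq_true_eq]
  rintro ⟨hu, hv⟩
  have hcompare : h u < h v ↔ h v < h u := by
    rw [← decide_eq_decide, ← hu v huv, ← hv u huv.symm, Sym2.eq_swap]
  rcases (h.valid huv).lt_or_gt with hlt | hlt
  · exact hlt.asymm (hcompare.1 hlt)
  · exact hlt.asymm (hcompare.2 hlt)

theorem measurable_sinkIndicator [Countable V] (v : V) :
    Measurable[⨆ e ∈ G.incidenceSet v, MeasurableSpace.comap (ξ e) inferInstance]
      (sinkIndicator h ξ v) := by
  let m := ⨆ e ∈ G.incidenceSet v, MeasurableSpace.comap (ξ e) inferInstance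
  refine measurable_to_bool (mα := m) ?_
  have hmeas (w : V) (hw : w ∈ G.neighborSet v) :
      MeasurableSet[m] (ξ s(v, w) ⁻¹' {decide (h v < h w)}) := by
    have hle : MeasurableSpace.comap (ξ s(v, w)) inferInstance ≤ m :=
      le_iSup₂ (f := fun e (_ : e ∈ G.incidenceSet v) => MeasurableSpace.comap (ξ e) inferInstance)
        s(v, w) (G.mk'_mem_incidenceSet_left_iff.2 hw)
    exact hle _ ⟨_, measurableSet_singleton _, rfl⟩
  have hinter := MeasurableSet.biInter (Set.to_countable (G.neighborSet v)) hmeas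
  rwa [← setOf_sinkIndicator_eq_true] at hinter

variable [MeasurableSpace Ω] {μ : Measure Ω}

theorem isOneDependentHardCore_sinkIndicator [Countable V] (hξ : iIndepFun ξ μ)
    (hξm : ∀ e, Measurable (ξ e)) : IsOneDependentHardCore G μ (sinkIndicator h ξ) where
  measurable v :=
    (measurable_sinkIndicator h v).mono (iSup₂_le fun e _ => (hξm e).comap_le) le_rfl
  hardCore u v huv := by simp [not_sinkIndicator_of_adj h huv]
  oneDependent := .of_iIndepFun hξ hξm G.incidenceSet
    (fun _ _ hne hadj => Set.disjoint_iff_inter_eq_empty.2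
      (G.incidenceSet_inter_incidenceSet_of_not_adj hadj hne))
    (measurable_sinkIndicator h)

theorem measureReal_sinkIndicator (hξ : iIndepFun ξ μ) {v : V} {S : Finset V}
    (hS : G.neighborSet v = S) :
    μ.real {ω | sinkIndicator h ξ v ω = true} =
      ∏ w ∈ S, μ.real {ω | ξ s(v, w) ω = decide (h v < h w)} := by
  have hinj : Function.Injective fun w => s(v, w) := fun _ _ => Sym2.congr_right.1
  have hprod := (hξ.precomp hinj).measure_inter_preimage_eq_mul S
    (sets := fun w => {decide (h v < h w)}) fun _ _ => measurableSet_singleton _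
  rw [setOf_sinkIndicator_eq_true, hS, measureReal_def]
  simp only [Finset.mem_coe]
  rw [hprod, ENNReal.toReal_prod]
  rfl

end SinkIndicator

universe u in
theorem exists_isOneDependentHardCore_of_coloring {V : Type u} [Countable V] {G : SimpleGraph V}
    {α : Type*} [LinearOrder α] (h : G.Coloring α) (x : unitInterval) :
    ∃ (Ω : Type u) (_ : MeasurableSpace Ω) (μ : Measure Ω), IsProbabilityMeasure μ ∧
      ∃ J : V → Ω → Bool, IsOneDependentHardCore G μ J ∧
        ∀ (v : V) (S : Finset V), G.neighborSet v = S →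
          μ.real {ω | J v ω = true} = ∏ w ∈ S, if h v < h w then (x : ℝ) else 1 - x := by
  obtain ⟨Ω, _, μ, ξ, hξm, hlaw, hξ, hμ⟩ := exists_iid (Sym2 V) (bernoulliMeasure true false x)
  refine ⟨Ω, _, μ, hμ, sinkIndicator h ξ, isOneDependentHardCore_sinkIndicator h hξ hξm,
    fun v S hS => ?_⟩
  rw [measureReal_sinkIndicator h hξ hS]
  refine Finset.prod_congr rfl fun w _ => ?_
  rw [(hlaw s(v, w)).measureReal_eq (p := fun b => b = decide (h v < h w))
    (measurableSet_singleton _)]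
  by_cases hvw : h v < h w <;> simp [hvw]

/-! ### Vacancy probabilities -/

section Vacancy

theorem OneDependent.measureReal_inter {V E Ω : Type*} [MeasurableSpace E]
    [MeasurableSingletonClass E] [MeasurableSpace Ω] {G : SimpleGraph V} {μ : Measure Ω}
    {X : V → Ω → E} (hX : OneDependent G μ X) {A B : Set V} [Countable A] [Countable B]
    (hAB : ∀ a ∈ A, ∀ b ∈ B, a ≠ b ∧ ¬G.Adj a b) (x y : V → E) :
    μ.real ({ω | ∀ a ∈ A, X a ω = x a} ∩ {ω | ∀ b ∈ B, X b ω = y b}) =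
      μ.real {ω | ∀ a ∈ A, X a ω = x a} * μ.real {ω | ∀ b ∈ B, X b ω = y b} := by
  have hpreimage (C : Set V) (z : V → E) : {ω | ∀ c ∈ C, X c ω = z c} =
      (fun ω (c : C) => X c.1 ω) ⁻¹' {fun c => z c.1} := by
    ext ω
    simp [funext_iff]
  simp only [hpreimage, measureReal_def]
  rw [(hX A B hAB).measure_inter_preimage_eq_mul _ _ (measurableSet_singleton _)
    (measurableSet_singleton _), ENNReal.toReal_mul]

variable {V Ω : Type*} [MeasurableSpace Ω] {G : SimpleGraph V} {μ : Measure Ω} {J : V → Ω → Bool}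

/-- The probability that all vertices of `S` are vacant, i.e. that `J` vanishes on `S`. -/
noncomputable def vacancyProb (μ : Measure Ω) (J : V → Ω → Bool) (S : Finset V) : ℝ :=
  μ.real {ω | ∀ v ∈ S, J v ω = false}

theorem vacancyProb_nonneg (S : Finset V) : 0 ≤ vacancyProb μ J S :=
  measureReal_nonneg

@[simp]
theorem vacancyProb_empty [IsProbabilityMeasure μ] : vacancyProb μ J ∅ = 1 := by
  simp [vacancyProb]

theorem OneDependent.vacancyProb_union [DecidableEq V] (hJ : OneDependent G μ J) {A B : Finset V}
    (hAB : ∀ a ∈ A, ∀ b ∈ B, a ≠ b ∧ ¬G.Adj a b) :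
    vacancyProb μ J (A ∪ B) = vacancyProb μ J A * vacancyProb μ J B := by
  have hinter := hJ.measureReal_inter (A := A) (B := B) hAB (fun _ => false) (fun _ => false)
  simpa only [vacancyProb, Finset.mem_coe, Finset.mem_union, or_imp, forall_and,
    Set.ofPred_and] using hinter

theorem OneDependent.vacancyProb_biUnion [DecidableEq V] [IsProbabilityMeasure μ]
    (hJ : OneDependent G μ J) {ι : Type*} (I : Finset ι) (A : ι → Finset V)
    (hA : ∀ i ∈ I, ∀ j ∈ I, i ≠ j → ∀ a ∈ A i, ∀ b ∈ A j, a ≠ b ∧ ¬G.Adj a b) :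
    vacancyProb μ J (I.biUnion A) = ∏ i ∈ I, vacancyProb μ J (A i) := by
  classical
  induction I using Finset.induction_on with
  | empty => simp
  | insert i I hi ih =>
    have hsep : ∀ a ∈ A i, ∀ b ∈ I.biUnion A, a ≠ b ∧ ¬G.Adj a b := by
      intro a ha b hb
      obtain ⟨j, hj, hb⟩ := Finset.mem_biUnion.1 hb
      exact hA i (Finset.mem_insert_self i I) j (Finset.mem_insert_of_mem hj)
        (ne_of_mem_of_not_mem hj hi).symm a ha b hb
    rw [Finset.biUnion_insert, hJ.vacancyProb_union hsep, Finset.prod_insert hi,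
      ih fun j hj k hk => hA j (Finset.mem_insert_of_mem hj) k (Finset.mem_insert_of_mem hk)]

theorem HardCore.measureReal_occupied_inter_vacant [DecidableRel G.Adj] (hJ : HardCore G μ J)
    (v : V) (S : Finset V) :
    μ.real ({ω | J v ω = true} ∩ {ω | ∀ s ∈ S, J s ω = false}) =
      μ.real ({ω | J v ω = true} ∩ {ω | ∀ s ∈ S.filter (¬G.Adj v ·), J s ω = false}) := by
  have hneighbors : ∀ᵐ ω ∂μ, ∀ s ∈ S, G.Adj v s → J v ω = true → J s ω = false := by
    rw [eventually_all_finset]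
    intro s _
    by_cases hvs : G.Adj v s
    · have hae : ∀ᵐ ω ∂μ, ¬(J v ω = true ∧ J s ω = true) := by
        simpa [ae_iff] using hJ v s hvs
      simpa [hvs] using hae
    · simp [hvs]
  refine measureReal_congr ?_
  filter_upwards [hneighbors] with ω hω
  refine propext (and_congr_right fun hv => ⟨fun hS s hs => hS s (Finset.mem_filter.1 hs).1,
    fun hS s hs => ?_⟩)
  by_cases hvs : G.Adj v s
  · exact hω s hs hvs hv
  · exact hS s (Finset.mem_filter.2 ⟨hs, hvs⟩)

theorem IsOneDependentHardCore.vacancyProb_insert [DecidableEq V] [DecidableRel G.Adj]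
    [IsFiniteMeasure μ] (hJ : IsOneDependentHardCore G μ J) {v : V} {S : Finset V} (hv : v ∉ S) :
    vacancyProb μ J (insert v S) = vacancyProb μ J S -
      μ.real {ω | J v ω = true} * vacancyProb μ J (S.filter (¬G.Adj v ·)) := by
  have hsplit := measureReal_sdiff_add_inter (μ := μ) (s := {ω | ∀ s ∈ S, J s ω = false})
    (t := {ω | J v ω = true}) (hJ.measurable v (measurableSet_singleton true))
  have hvacant : {ω | ∀ s ∈ S, J s ω = false} \ {ω | J v ω = true} =
      {ω | ∀ s ∈ insert v S, J s ω = false} := by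
    ext ω
    simp [and_comm]
  have hsep : ∀ a ∈ ({v} : Set V), ∀ s ∈ (↑(S.filter (¬G.Adj v ·)) : Set V),
      a ≠ s ∧ ¬G.Adj a s := by
    rintro _ rfl s hs
    obtain ⟨hs, hvs⟩ := Finset.mem_filter.1 hs
    exact ⟨(ne_of_mem_of_not_mem hs hv).symm, hvs⟩
  have hindep := hJ.oneDependent.measureReal_inter hsep (fun _ => true) (fun _ => false)
  simp only [Set.mem_singleton_iff, forall_eq, Finset.mem_coe] at hindep
  rw [hvacant, Set.inter_comm, hJ.hardCore.measureReal_occupied_inter_vacant,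
    hindep] at hsplit
  exact eq_sub_of_add_eq hsplit

end Vacancy

/-! ### Vacancy of segments of a ray -/

section PathVacancy

/-- The probability that a path of `n` vertices is vacant in a 1-dependent hard-core process
with marginals `p`. -/
noncomputable def pathVacancy (p : ℝ) : ℕ → ℝ
  | 0 => 1
  | 1 => 1 - p
  | n + 2 => pathVacancy p (n + 1) - p * pathVacancy p n

theorem IsOneDependentHardCore.vacancyProb_ray {V Ω : Type*} [MeasurableSpace Ω]
    {G : SimpleGraph V} {μ : Measure Ω} [IsProbabilityMeasure μ] {J : V → Ω → Bool} {p : ℝ}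
    (hJ : IsOneDependentHardCore G μ J) (hp : ∀ v, μ.real {ω | J v ω = true} = p)
    (x : SimpleGraph.hasse ℕ ↪g G) (m : ℕ) :
    ∀ n, vacancyProb μ J ((Finset.Ico m (m + n)).map x.toEmbedding) = pathVacancy p n := by
  classical
  have hadd (n : ℕ) : (Finset.Ico m (m + (n + 1))).map x.toEmbedding =
      insert (x (m + n)) ((Finset.Ico m (m + n)).map x.toEmbedding) := by
    rw [← add_assoc, Finset.Ico_add_one_right_eq_Icc, ← Finset.Ico_insert_right (by omega),
      Finset.map_insert]
    rfl
  have hnot (n : ℕ) : x (m + n) ∉ (Finset.Ico m (m + n)).map x.toEmbedding := by simp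
  have hfilter (n : ℕ) : (((Finset.Ico m (m + (n + 1))).map x.toEmbedding).filter
      fun s => ¬G.Adj (x (m + (n + 1))) s) = (Finset.Ico m (m + n)).map x.toEmbedding := by
    rw [Finset.filter_map]
    congr 1
    ext k
    simp only [Finset.mem_filter, Finset.mem_Ico, Function.comp_apply,
      RelEmbedding.coe_toEmbedding, SimpleGraph.Embedding.map_adj_iff, SimpleGraph.hasse_adj,
      Nat.covBy_iff_add_one_eq]
    omega
  intro n
  induction n using Nat.twoStepInduction with
  | zero => simp [pathVacancy]
  | one => rw [hadd, hJ.vacancyProb_insert (hnot 0), hp]; simp [pathVacancy]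
  | more n ih₀ ih₁ => rw [hadd, hJ.vacancyProb_insert (hnot _), hfilter, ih₀, ih₁, hp]; rfl

/-- The larger root of `x * (1 - x) = p`, for `p ≤ 1 / 4`. For `p > 1 / 4` the real square root
returns `0`, so the value is `1 / 2`. -/
noncomputable def upperRoot (p : ℝ) : ℝ :=
  (1 + √(1 - 4 * p)) / 2

theorem upperRoot_mul_one_sub {p : ℝ} (hp : p ≤ 1 / 4) :
    upperRoot p * (1 - upperRoot p) = p := by
  have hsq := Real.sq_sqrt (show 0 ≤ 1 - 4 * p by linarith)
  unfold upperRoot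
  linear_combination -hsq / 4

theorem le_upperRoot {x p : ℝ} (h : x * (1 - x) = p) : x ≤ upperRoot p := by
  have hsqrt : 2 * x - 1 ≤ √(1 - 4 * p) := Real.le_sqrt_of_sq_le (by linear_combination -4 * h)
  unfold upperRoot
  linarith

theorem upperRoot_nonneg (p : ℝ) : 0 ≤ upperRoot p := by
  unfold upperRoot
  positivity

theorem upperRoot_le_one {p : ℝ} (hp : 0 ≤ p) : upperRoot p ≤ 1 := by
  have hsqrt : √(1 - 4 * p) ≤ 1 := Real.sqrt_le_one.2 (by linarith)
  unfold upperRoot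
  linarith

theorem upperRoot_antitone : Antitone upperRoot := by
  intro p q hpq
  unfold upperRoot
  gcongr

theorem continuous_upperRoot : Continuous upperRoot := by
  unfold upperRoot
  fun_prop

/-- The conditional probability that the next vertex of a path is vacant, given that the `n`
vertices before it are. -/
noncomputable def vacancyRatio (p : ℝ) (n : ℕ) : ℝ :=
  pathVacancy p (n + 1) / pathVacancy p n

variable {p : ℝ}

theorem pathVacancy_pos (hp : 0 < p) (hnn : ∀ n, 0 ≤ pathVacancy p n) (n : ℕ) :
    0 < pathVacancy p n := by
  induction n with
  | zero => simp [pathVacancy]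
  | succ n ih =>
    refine (hnn _).lt_of_ne fun hzero => ?_
    have hnext : pathVacancy p (n + 2) = pathVacancy p (n + 1) - p * pathVacancy p n := rfl
    linarith [hnn (n + 2), mul_pos hp ih]

theorem vacancyRatio_succ (hpos : ∀ n, 0 < pathVacancy p n) (n : ℕ) :
    vacancyRatio p (n + 1) = 1 - p / vacancyRatio p n := by
  have hnext : pathVacancy p (n + 2) = pathVacancy p (n + 1) - p * pathVacancy p n := rfl
  rw [vacancyRatio, vacancyRatio, hnext]
  field_simp [(hpos n).ne', (hpos (n + 1)).ne']

theorem vacancyRatio_antitone (hp : 0 < p) (hpos : ∀ n, 0 < pathVacancy p n) :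
    Antitone (vacancyRatio p) := by
  have hrpos (n : ℕ) : 0 < vacancyRatio p n := div_pos (hpos _) (hpos _)
  refine antitone_nat_of_succ_le fun n => ?_
  induction n with
  | zero =>
    have hzero : vacancyRatio p 0 = 1 - p := by simp [vacancyRatio, pathVacancy]
    have hle : p ≤ p / vacancyRatio p 0 := le_div_self hp.le (hrpos 0) (by linarith)
    linarith [vacancyRatio_succ hpos 0]
  | succ n ih =>
    rw [vacancyRatio_succ hpos (n + 1), vacancyRatio_succ hpos n]
    have hrn := hrpos (n + 1)
    rw [vacancyRatio_succ hpos n] at hrn ih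
    gcongr

theorem exists_tendsto_vacancyRatio (hp : 0 < p) (hpos : ∀ n, 0 < pathVacancy p n) :
    ∃ L, Tendsto (vacancyRatio p) atTop (𝓝 L) ∧ 0 ≤ L ∧ L * (1 - L) = p := by
  have hrpos (n : ℕ) : 0 < vacancyRatio p n := div_pos (hpos _) (hpos _)
  have hlim := tendsto_atTop_ciInf (vacancyRatio_antitone hp hpos)
    ⟨0, Set.forall_mem_range.2 fun n => (hrpos n).le⟩
  refine ⟨_, hlim, ge_of_tendsto' hlim fun n => (hrpos n).le, ?_⟩
  have hlim_succ := (tendsto_add_atTop_iff_nat 1).2 hlim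
  refine tendsto_nhds_unique (hlim.mul (hlim_succ.const_sub 1)) ?_
  refine tendsto_const_nhds.congr fun n => ?_
  have hne := (hrpos n).ne'
  rw [vacancyRatio_succ hpos]
  field_simp
  ring

theorem le_upperRoot_pow (hp : 0 < p) (hnn : ∀ n, 0 ≤ pathVacancy p n) {d : ℕ}
    (hd : ∀ n, p * pathVacancy p n ^ d ≤ pathVacancy p (n + 1) ^ d) : p ≤ upperRoot p ^ d := by
  have hpos := pathVacancy_pos hp hnn
  obtain ⟨L, hlim, hL, hroot⟩ := exists_tendsto_vacancyRatio hp hpos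
  have hpow (n : ℕ) : p ≤ vacancyRatio p n ^ d := by
    rw [vacancyRatio, div_pow, le_div_iff₀ (pow_pos (hpos n) d)]
    exact hd n
  calc p ≤ L ^ d := ge_of_tendsto' (hlim.pow d) hpow
    _ ≤ upperRoot p ^ d := pow_le_pow_left₀ hL (le_upperRoot hroot) d

end PathVacancy

/-! ### The star graph -/

section Star

variable {d : ℕ}

@[simp]
theorem starGraph_adj_none_some {i : Fin d} {k : ℕ} :
    (starGraph d).Adj none (some (i, k)) ↔ k = 0 := by
  simp [starGraph, eq_comm]

@[simp]
theorem starGraph_adj_some_none {i : Fin d} {k : ℕ} :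
    (starGraph d).Adj (some (i, k)) none ↔ k = 0 := by
  rw [SimpleGraph.adj_comm, starGraph_adj_none_some]

@[simp]
theorem starGraph_adj_some_some {i j : Fin d} {k l : ℕ} :
    (starGraph d).Adj (some (i, k)) (some (j, l)) ↔ i = j ∧ (l = k + 1 ∨ k = l + 1) := by
  simp only [starGraph, SimpleGraph.fromRel_adj]
  grind

/-- The distance to the centre, as a proper colouring. -/
def starDepth (d : ℕ) : (starGraph d).Coloring ℕ :=
  SimpleGraph.Coloring.mk (fun v => v.elim 0 fun x => x.2 + 1) (by
    rintro (_ | ⟨i, k⟩) (_ | ⟨j, l⟩) <;> grind [starGraph_adj_none_some, starGraph_adj_some_none,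
      starGraph_adj_some_some, SimpleGraph.irrefl])

/-- The neighbour of the ray vertex `some (i, k)` on the side of the centre. -/
def starParent (i : Fin d) : ℕ → Option (Fin d × ℕ)
  | 0 => none
  | k + 1 => some (i, k)

@[simp]
theorem starDepth_none : starDepth d none = 0 :=
  rfl

@[simp]
theorem starDepth_some (i : Fin d) (k : ℕ) : starDepth d (some (i, k)) = k + 1 :=
  rfl

@[simp]
theorem starDepth_starParent (i : Fin d) (k : ℕ) : starDepth d (starParent i k) = k := by
  cases k <;> rfl

theorem neighborSet_starGraph_none :
    (starGraph d).neighborSet none =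
      (Finset.univ.image fun i : Fin d => some (i, 0) : Finset (Option (Fin d × ℕ))) := by
  ext (_ | ⟨i, k⟩) <;> simp [eq_comm]

theorem neighborSet_starGraph_some (i : Fin d) (k : ℕ) :
    (starGraph d).neighborSet (some (i, k)) =
      ({starParent i k, some (i, k + 1)} : Finset (Option (Fin d × ℕ))) := by
  ext (_ | ⟨j, l⟩) <;> cases k <;>
    grind [starParent, starGraph_adj_some_none, starGraph_adj_some_some,
      SimpleGraph.mem_neighborSet]

theorem mem_hardCoreMarginals_starGraph {p : ℝ} {x : unitInterval} (hcentre : (x : ℝ) ^ d = p)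
    (hray : (x : ℝ) * (1 - x) = p) : p ∈ hardCoreMarginals (starGraph d) := by
  obtain ⟨Ω, _, μ, hμ, J, hJ, hmarginal⟩ :=
    exists_isOneDependentHardCore_of_coloring (starDepth d) x
  refine ⟨Ω, _, μ, hμ, J, hJ, ?_⟩
  rintro (_ | ⟨i, k⟩)
  · rw [hmarginal _ _ neighborSet_starGraph_none, Finset.prod_image (by simp [Function.Injective])]
    simp [hcentre]
  · have hne : starParent i k ≠ some (i, k + 1) := by
      cases k <;> grind [starParent]
    rw [hmarginal _ _ (neighborSet_starGraph_some i k), Finset.prod_pair hne, ← hray]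
    simp [mul_comm]

/-- The `i`-th ray, without the centre. -/
def starRay (i : Fin d) : SimpleGraph.hasse ℕ ↪g starGraph d where
  toFun k := some (i, k)
  inj' k l := by simp
  map_rel_iff' {k l} := by
    change (starGraph d).Adj (some (i, k)) (some (i, l)) ↔ _
    simp [eq_comm]

@[simp]
theorem starRay_apply (i : Fin d) (k : ℕ) : starRay i k = some (i, k) :=
  rfl

/-- The vertices at positions `m, ..., m + n - 1` of all rays, counted from `0` without the
centre. -/
def starSegments (d m n : ℕ) : Finset (Option (Fin d × ℕ)) :=
  Finset.univ.biUnion fun i => (Finset.Ico m (m + n)).map (starRay i).toEmbedding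

theorem none_notMem_starSegments (m n : ℕ) : none ∉ starSegments d m n := by
  simp [starSegments]

theorem some_mem_starSegments {i : Fin d} {k m n : ℕ} :
    some (i, k) ∈ starSegments d m n ↔ m ≤ k ∧ k < m + n := by
  simp [starSegments]

theorem filter_not_adj_none_starSegments [DecidableRel (starGraph d).Adj] (n : ℕ) :
    (starSegments d 0 (n + 1)).filter (¬(starGraph d).Adj none ·) = starSegments d 1 n := by
  ext (_ | ⟨i, k⟩)
  · simp [none_notMem_starSegments]
  · simp only [Finset.mem_filter, some_mem_starSegments, starGraph_adj_none_some]
    omega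

section UpperBound

variable {Ω : Type*} [MeasurableSpace Ω] {μ : Measure Ω} [IsProbabilityMeasure μ]
  {J : Option (Fin d × ℕ) → Ω → Bool} {p : ℝ}

theorem IsOneDependentHardCore.vacancyProb_starSegments
    (hJ : IsOneDependentHardCore (starGraph d) μ J) (hp : ∀ v, μ.real {ω | J v ω = true} = p)
    (m n : ℕ) : vacancyProb μ J (starSegments d m n) = pathVacancy p n ^ d := by
  rw [starSegments, hJ.oneDependent.vacancyProb_biUnion]
  · simp [hJ.vacancyProb_ray hp]
  · intro i _ j _ hij a ha b hb
    obtain ⟨k, _, rfl⟩ := Finset.mem_map.1 ha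
    obtain ⟨l, _, rfl⟩ := Finset.mem_map.1 hb
    simp [hij]

theorem IsOneDependentHardCore.mul_pathVacancy_pow_le
    (hJ : IsOneDependentHardCore (starGraph d) μ J) (hp : ∀ v, μ.real {ω | J v ω = true} = p)
    (n : ℕ) : p * pathVacancy p n ^ d ≤ pathVacancy p (n + 1) ^ d := by
  classical
  have hinsert := hJ.vacancyProb_insert (none_notMem_starSegments 0 (n + 1))
  rw [filter_not_adj_none_starSegments, hJ.vacancyProb_starSegments hp,
    hJ.vacancyProb_starSegments hp, hp] at hinsert
  exact sub_nonneg.1 (hinsert ▸ vacancyProb_nonneg _)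

end UpperBound

theorem le_upperRoot_pow_of_mem_hardCoreMarginals {p : ℝ} (hd : d ≠ 0) (hp : 0 < p)
    (hmem : p ∈ hardCoreMarginals (starGraph d)) : p ≤ upperRoot p ^ d := by
  obtain ⟨Ω, _, μ, hμ, J, hJ, hmarginal⟩ := hmem
  refine le_upperRoot_pow hp (fun n => ?_) (hJ.mul_pathVacancy_pow_le hmarginal)
  rw [← hJ.vacancyProb_ray hmarginal (starRay ⟨0, Nat.pos_of_ne_zero hd⟩) 0 n]
  exact vacancyProb_nonneg _

theorem exists_upperRoot_pow_eq (hd : 2 ≤ d) :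
    ∃ q ∈ Set.Ioc (0 : ℝ) (1 / 4), upperRoot q ^ d = q := by
  have hcont : Continuous fun q => upperRoot q ^ d - q :=
    (continuous_upperRoot.pow d).sub continuous_id
  have hzero : upperRoot 0 ^ d - 0 = 1 := by norm_num [upperRoot]
  have hquarter : upperRoot (1 / 4) ^ d - 1 / 4 ≤ 0 := by
    have hle : ((1 : ℝ) / 2) ^ d ≤ (1 / 2) ^ 2 :=
      pow_le_pow_of_le_one (by norm_num) (by norm_num) hd
    norm_num [upperRoot] at hle ⊢
    exact hle
  obtain ⟨q, hq, hroot⟩ := intermediate_value_Ioc' (by norm_num) hcont.continuousOn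
    (show (0 : ℝ) ∈ Set.Ico _ _ from ⟨hquarter, hzero ▸ one_pos⟩)
  exact ⟨q, hq, sub_eq_zero.1 hroot⟩

theorem isGreatest_hardCoreMarginals_starGraph {q : ℝ} (hq : q ∈ Set.Ioc (0 : ℝ) (1 / 4))
    (hroot : upperRoot q ^ d = q) : IsGreatest (hardCoreMarginals (starGraph d)) q := by
  have hd : d ≠ 0 := by
    rintro rfl
    linarith [hq.2, pow_zero (upperRoot q)]
  refine ⟨mem_hardCoreMarginals_starGraph
    (x := ⟨upperRoot q, upperRoot_nonneg q, upperRoot_le_one hq.1.le⟩)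
    hroot (upperRoot_mul_one_sub hq.2), fun p hp => ?_⟩
  by_contra! hlt
  have hle : p ≤ q := calc
    p ≤ upperRoot p ^ d := le_upperRoot_pow_of_mem_hardCoreMarginals hd (hq.1.trans hlt) hp
    _ ≤ upperRoot q ^ d := pow_le_pow_left₀ (upperRoot_nonneg p) (upperRoot_antitone hlt.le) d
    _ = q := hroot
  exact hle.not_gt hlt

end Star

/-- For each `d ≥ 2`, the critical point `p_h(S^d)` of the `d`-ray
star graph lies in `(0, 1/4]` and satisfies `((1 + √(1 - 4p))/2)^d = p`; i.e. it is
the unique solution of this equation in `(0, 1/4]`. -/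
theorem pCrit_starGraph (d : ℕ) (hd : 2 ≤ d) :
    pCrit (starGraph d) ∈ Set.Ioc (0 : ℝ) (1 / 4) ∧
    ((1 + Real.sqrt (1 - 4 * pCrit (starGraph d))) / 2) ^ d = pCrit (starGraph d) := by
  obtain ⟨q, hq, hroot⟩ := exists_upperRoot_pow_eq hd
  have hcrit : pCrit (starGraph d) = q := by
    rw [pCrit_eq_sSup_hardCoreMarginals]
    exact (isGreatest_hardCoreMarginals_starGraph hq hroot).csSup_eq
  rw [hcrit]
  exact ⟨hq, hroot⟩
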